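/- arXiv:2001.09688 — 3 statements merged into one kernel-verified Lean document; each statement's English description precedes it below -/
import Mathlib

section
/- Let p1, q1, p2, q2 be pairwise distinct reals and X1, X2 ∈ S. Suppose X1', X2' are rank-one K-projections such that for every real λ ∉ {q1, q2} one has A1(λ,X1) A2(λ,X2) = A2(λ,X2') A1(λ,X1') and Ã1(λ,X1) Ã2(λ,X2) = Ã2(λ,X2') Ã1(λ,X1'). Assume (p2−p1)(q2−q1) − (p1−q1)(p2−q2)·tr(K X1 K X2) ≠ 0. Then X1' = α_{12} (1_m − ((p2−q2)/(p2−p1)) X2 K) X1 (1_n − ((p2−q2)/(q1−q2)) K X2) and X2' = α_{12} (1_m − ((p1−q1)/(q2−q1)) X1 K) X2 (1_n − ((p1−q1)/(p1−p2)) K X1), where α_{12} = (1 − ((p1−q1)(p2−q2))/((p2−p1)(q2−q1)) · tr(K X1 K X2))^{-1}; that is, (X1',X2') = R(p1,q1;p2,q2)(X1,X2). -/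
open Matrix

/-- The space of real `m × n` matrices. -/
abbrev Mat (m n : ℕ) := Matrix (Fin m) (Fin n) ℝ

/-- `X` is a rank-one `K`-projection, i.e. `X ∈ S`. -/
def InS {m n : ℕ} (K : Matrix (Fin n) (Fin m) ℝ) (X : Mat m n) : Prop :=
  X * K * X = X ∧ X.rank = 1

/-- `A(p,q,λ,X) = 1ₘ − ((p−q)/(λ−q)) X K`. -/
noncomputable def Amat {m n : ℕ} (K : Matrix (Fin n) (Fin m) ℝ) (p q lam : ℝ) (X : Mat m n) :
    Matrix (Fin m) (Fin m) ℝ :=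
  1 - ((p - q) / (lam - q)) • (X * K)

/-- `Ã(p,q,λ,X) = 1ₙ − ((p−q)/(λ−q)) K X`. -/
noncomputable def Atil {m n : ℕ} (K : Matrix (Fin n) (Fin m) ℝ) (p q lam : ℝ) (X : Mat m n) :
    Matrix (Fin n) (Fin n) ℝ :=
  1 - ((p - q) / (lam - q)) • (K * X)

/-- `B(p,q,λ,X) = 1ₘ + ((p−q)/(λ−p)) X K`. -/
noncomputable def Bmat {m n : ℕ} (K : Matrix (Fin n) (Fin m) ℝ) (p q lam : ℝ) (X : Mat m n) :
    Matrix (Fin m) (Fin m) ℝ :=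
  1 + ((p - q) / (lam - p)) • (X * K)

/-- `B̃(p,q,λ,X) = 1ₙ + ((p−q)/(λ−p)) K X`. -/
noncomputable def Btil {m n : ℕ} (K : Matrix (Fin n) (Fin m) ℝ) (p q lam : ℝ) (X : Mat m n) :
    Matrix (Fin n) (Fin n) ℝ :=
  1 + ((p - q) / (lam - p)) • (K * X)

/-- `α₁₂⁻¹ = 1 − ((p1−q1)(p2−q2))/((p2−p1)(q2−q1)) · tr(K X1 K X2)`. -/
noncomputable def adenom {m n : ℕ} (K : Matrix (Fin n) (Fin m) ℝ) (p1 q1 p2 q2 : ℝ)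
    (X1 X2 : Mat m n) : ℝ :=
  1 - (p1 - q1) * (p2 - q2) / ((p2 - p1) * (q2 - q1)) * (K * X1 * K * X2).trace

/-- The Yang–Baxter map `R(p1,q1;p2,q2)`. -/
noncomputable def Rmap {m n : ℕ} (K : Matrix (Fin n) (Fin m) ℝ) (p1 q1 p2 q2 : ℝ)
    (X : Mat m n × Mat m n) : Mat m n × Mat m n :=
  ((adenom K p1 q1 p2 q2 X.1 X.2)⁻¹ •
      ((1 - ((p2 - q2) / (p2 - p1)) • (X.2 * K)) * X.1 *
        (1 - ((p2 - q2) / (q1 - q2)) • (K * X.2))),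
   (adenom K p1 q1 p2 q2 X.1 X.2)⁻¹ •
      ((1 - ((p1 - q1) / (q2 - q1)) • (X.1 * K)) * X.2 *
        (1 - ((p1 - q1) / (p1 - p2)) • (K * X.1))))

/-- Trace denominator of the first component of the map `T`:
`tr[A₂(p1,X2) X1 B̃₂(q1,X2) K]`. -/
noncomputable def Tden1 {m n : ℕ} (K : Matrix (Fin n) (Fin m) ℝ) (p1 q1 p2 q2 : ℝ)
    (X1 X2 : Mat m n) : ℝ :=
  (Amat K p2 q2 p1 X2 * X1 * Btil K p2 q2 q1 X2 * K).trace

/-- Trace denominator of the second component of the map `T`: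
`tr[A₁(p2,X1) X2 B̃₁(q2,X1) K]`. -/
noncomputable def Tden2 {m n : ℕ} (K : Matrix (Fin n) (Fin m) ℝ) (p1 q1 p2 q2 : ℝ)
    (X1 X2 : Mat m n) : ℝ :=
  (Amat K p1 q1 p2 X1 * X2 * Btil K p1 q1 q2 X1 * K).trace

/-- The (non-Yang–Baxter) map `T(p1,q1;p2,q2)`. -/
noncomputable def Tmap {m n : ℕ} (K : Matrix (Fin n) (Fin m) ℝ) (p1 q1 p2 q2 : ℝ)
    (X : Mat m n × Mat m n) : Mat m n × Mat m n :=
  ((Tden1 K p1 q1 p2 q2 X.1 X.2)⁻¹ • (Amat K p2 q2 p1 X.2 * X.1 * Btil K p2 q2 q1 X.2),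
   (Tden2 K p1 q1 p2 q2 X.1 X.2)⁻¹ • (Amat K p1 q1 p2 X.1 * X.2 * Btil K p1 q1 q2 X.1))

/-- Trace denominator of the first component of `T⁻¹`: `tr[B₂(q1,X2) X1 Ã₂(p1,X2) K]`. -/
noncomputable def Tinvden1 {m n : ℕ} (K : Matrix (Fin n) (Fin m) ℝ) (p1 q1 p2 q2 : ℝ)
    (X1 X2 : Mat m n) : ℝ :=
  (Bmat K p2 q2 q1 X2 * X1 * Atil K p2 q2 p1 X2 * K).trace

/-- Trace denominator of the second component of `T⁻¹`: `tr[B₁(q2,X1) X2 Ã₁(p2,X1) K]`. -/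
noncomputable def Tinvden2 {m n : ℕ} (K : Matrix (Fin n) (Fin m) ℝ) (p1 q1 p2 q2 : ℝ)
    (X1 X2 : Mat m n) : ℝ :=
  (Bmat K p1 q1 q2 X1 * X2 * Atil K p1 q1 p2 X1 * K).trace

/-- The map `Tinv(p1,q1;p2,q2)`, the inverse of `T(p1,q1;p2,q2)`. -/
noncomputable def Tinvmap {m n : ℕ} (K : Matrix (Fin n) (Fin m) ℝ) (p1 q1 p2 q2 : ℝ)
    (X : Mat m n × Mat m n) : Mat m n × Mat m n :=
  ((Tinvden1 K p1 q1 p2 q2 X.1 X.2)⁻¹ • (Bmat K p2 q2 q1 X.2 * X.1 * Atil K p2 q2 p1 X.2),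
   (Tinvden2 K p1 q1 p2 q2 X.1 X.2)⁻¹ • (Bmat K p1 q1 q2 X.1 * X.2 * Atil K p1 q1 p2 X.1))

/-- Trace denominator of the first component of `R⁻¹`: `tr[A₂(q1,X2) X1 B̃₂(p1,X2) K]`. -/
noncomputable def Rinvden1 {m n : ℕ} (K : Matrix (Fin n) (Fin m) ℝ) (p1 q1 p2 q2 : ℝ)
    (X1 X2 : Mat m n) : ℝ :=
  (Amat K p2 q2 q1 X2 * X1 * Btil K p2 q2 p1 X2 * K).trace

/-- Trace denominator of the second component of `R⁻¹`: `tr[B₁(p2,X1) X2 Ã₁(q2,X1) K]`. -/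
noncomputable def Rinvden2 {m n : ℕ} (K : Matrix (Fin n) (Fin m) ℝ) (p1 q1 p2 q2 : ℝ)
    (X1 X2 : Mat m n) : ℝ :=
  (Bmat K p1 q1 p2 X1 * X2 * Atil K p1 q1 q2 X1 * K).trace

/-- The map `Rinv(p1,q1;p2,q2)`, the inverse of `R(p1,q1;p2,q2)`. -/
noncomputable def Rinvmap {m n : ℕ} (K : Matrix (Fin n) (Fin m) ℝ) (p1 q1 p2 q2 : ℝ)
    (X : Mat m n × Mat m n) : Mat m n × Mat m n :=
  ((Rinvden1 K p1 q1 p2 q2 X.1 X.2)⁻¹ • (Amat K p2 q2 q1 X.2 * X.1 * Btil K p2 q2 p1 X.2),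
   (Rinvden2 K p1 q1 p2 q2 X.1 X.2)⁻¹ • (Bmat K p1 q1 p2 X.1 * X.2 * Atil K p1 q1 q2 X.1))

/-- `R` acting on components 1 and 2 of a triple. -/
noncomputable def R12t {m n : ℕ} (K : Matrix (Fin n) (Fin m) ℝ) (p1 q1 p2 q2 : ℝ)
    (X : Mat m n × Mat m n × Mat m n) : Mat m n × Mat m n × Mat m n :=
  ((Rmap K p1 q1 p2 q2 (X.1, X.2.1)).1, (Rmap K p1 q1 p2 q2 (X.1, X.2.1)).2, X.2.2)

/-- `R` acting on components 1 and 3 of a triple. -/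
noncomputable def R13t {m n : ℕ} (K : Matrix (Fin n) (Fin m) ℝ) (p1 q1 p3 q3 : ℝ)
    (X : Mat m n × Mat m n × Mat m n) : Mat m n × Mat m n × Mat m n :=
  ((Rmap K p1 q1 p3 q3 (X.1, X.2.2)).1, X.2.1, (Rmap K p1 q1 p3 q3 (X.1, X.2.2)).2)

/-- `R` acting on components 2 and 3 of a triple. -/
noncomputable def R23t {m n : ℕ} (K : Matrix (Fin n) (Fin m) ℝ) (p2 q2 p3 q3 : ℝ)
    (X : Mat m n × Mat m n × Mat m n) : Mat m n × Mat m n × Mat m n :=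
  (X.1, Rmap K p2 q2 p3 q3 (X.2.1, X.2.2))

/-- `T` acting on components 1 and 2 of a triple. -/
noncomputable def T12t {m n : ℕ} (K : Matrix (Fin n) (Fin m) ℝ) (p1 q1 p2 q2 : ℝ)
    (X : Mat m n × Mat m n × Mat m n) : Mat m n × Mat m n × Mat m n :=
  ((Tmap K p1 q1 p2 q2 (X.1, X.2.1)).1, (Tmap K p1 q1 p2 q2 (X.1, X.2.1)).2, X.2.2)

/-- `T` acting on components 1 and 3 of a triple. -/
noncomputable def T13t {m n : ℕ} (K : Matrix (Fin n) (Fin m) ℝ) (p1 q1 p3 q3 : ℝ)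
    (X : Mat m n × Mat m n × Mat m n) : Mat m n × Mat m n × Mat m n :=
  ((Tmap K p1 q1 p3 q3 (X.1, X.2.2)).1, X.2.1, (Tmap K p1 q1 p3 q3 (X.1, X.2.2)).2)

/-- `T` acting on components 2 and 3 of a triple. -/
noncomputable def T23t {m n : ℕ} (K : Matrix (Fin n) (Fin m) ℝ) (p2 q2 p3 q3 : ℝ)
    (X : Mat m n × Mat m n × Mat m n) : Mat m n × Mat m n × Mat m n :=
  (X.1, Tmap K p2 q2 p3 q3 (X.2.1, X.2.2))

/-- `T⁻¹` acting on components 2 and 3 of a triple. -/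
noncomputable def Tinv23t {m n : ℕ} (K : Matrix (Fin n) (Fin m) ℝ) (p2 q2 p3 q3 : ℝ)
    (X : Mat m n × Mat m n × Mat m n) : Mat m n × Mat m n × Mat m n :=
  (X.1, Tinvmap K p2 q2 p3 q3 (X.2.1, X.2.2))

/-- `R⁻¹` acting on components 2 and 3 of a triple. -/
noncomputable def Rinv23t {m n : ℕ} (K : Matrix (Fin n) (Fin m) ℝ) (p2 q2 p3 q3 : ℝ)
    (X : Mat m n × Mat m n × Mat m n) : Mat m n × Mat m n × Mat m n :=
  (X.1, Rinvmap K p2 q2 p3 q3 (X.2.1, X.2.2))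

/-!
Both sides of the Lax equation become polynomial in `lam` after multiplication by
`(lam - q₁) * (lam - q₂)`, and their difference is affine, so the equation carries exactly the
information of its values at `p₁` and `p₂`. Since a factor degenerates to `1 - P` at `lam = p` and
is invertible elsewhere, the equation for the products `X * K` at `p₁` says that the columns of
`X₁'` lie in the column space of `A₂(p₁, X₂)⁻¹ X₁`, and the residue at `q₁` of the equation for the
products `K * X` says that its rows lie in the row space of `X₁ Ã₂(q₁, X₂)`. For rank-one matrices
these two facts fix `X₁'` up to a scalar, and the scalar is fixed by `tr (K X₁') = 1`. The formula
for `X₂'` is the one for `X₁'` applied to the transposed equations, in which the indices 1 and 2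
are exchanged.
-/

section LaxFactor

variable {F A : Type*} [Field F] [Ring A] [Algebra F A]

/-- The Lax factor `1 - ((p - q) / (lam - q)) • P` attached to an element `P` of an algebra.
It specializes to `Amat` and `Atil` for `P = X * K` and `P = K * X`; with `p` and `q` exchanged
it becomes `Bmat` and `Btil`. At the pole `lam = q` it takes the junk value `1`. -/
def laxFactor (p q lam : F) (P : A) : A :=
  1 - ((p - q) / (lam - q)) • P

/-- The Lax equation at the spectral parameter `lam`: the product of the factors of `P₁`, `P₂`
is refactorized in the opposite order by `P₁'`, `P₂'`. -/
def LaxEquation (p₁ q₁ p₂ q₂ lam : F) (P₁ P₂ P₁' P₂' : A) : Prop :=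
  laxFactor p₁ q₁ lam P₁ * laxFactor p₂ q₂ lam P₂ =
    laxFactor p₂ q₂ lam P₂' * laxFactor p₁ q₁ lam P₁'

variable {p q lam p₁ q₁ p₂ q₂ : F} {P P₁ P₂ P₁' P₂' : A}

lemma laxFactor_self (h : p ≠ q) (P : A) : laxFactor p q p P = 1 - P := by
  rw [laxFactor, div_self (sub_ne_zero.mpr h), one_smul]

lemma laxFactor_mul_laxFactor_swap (hP : IsIdempotentElem P) (hp : lam ≠ p) (hq : lam ≠ q) :
    laxFactor p q lam P * laxFactor q p lam P = 1 := by
  have hp' : lam - p ≠ 0 := sub_ne_zero.mpr hp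
  have hq' : lam - q ≠ 0 := sub_ne_zero.mpr hq
  simp only [laxFactor, mul_sub, sub_mul, smul_mul_assoc, mul_smul_comm, mul_one, one_mul,
    hP.eq]
  match_scalars <;> field_simp
  ring

namespace LaxEquation

lemma clear_denominators (h : LaxEquation p₁ q₁ p₂ q₂ lam P₁ P₂ P₁' P₂')
    (h₁ : lam ≠ q₁) (h₂ : lam ≠ q₂) :
    ((p₁ - q₁) * (lam - q₂)) • (P₁ - P₁') + ((p₂ - q₂) * (lam - q₁)) • (P₂ - P₂') =
      ((p₁ - q₁) * (p₂ - q₂)) • (P₁ * P₂ - P₂' * P₁') := by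
  have h₁' : lam - q₁ ≠ 0 := sub_ne_zero.mpr h₁
  have h₂' : lam - q₂ ≠ 0 := sub_ne_zero.mpr h₂
  simp only [LaxEquation, laxFactor, mul_sub, sub_mul, smul_mul_assoc, mul_smul_comm, mul_one,
    one_mul] at h
  linear_combination (norm := skip) (-((lam - q₁) * (lam - q₂))) • h
  match_scalars <;> field_simp <;> ring

lemma conserved_sum (hp : p₁ ≠ p₂) (hpq₁ : p₁ ≠ q₁) (hp₁q₂ : p₁ ≠ q₂) (hp₂q₁ : p₂ ≠ q₁)
    (hpq₂ : p₂ ≠ q₂) (h₁ : LaxEquation p₁ q₁ p₂ q₂ p₁ P₁ P₂ P₁' P₂')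
    (h₂ : LaxEquation p₁ q₁ p₂ q₂ p₂ P₁ P₂ P₁' P₂') :
    (p₁ - q₁) • P₁ + (p₂ - q₂) • P₂ = (p₁ - q₁) • P₁' + (p₂ - q₂) • P₂' := by
  have hp' : p₁ - p₂ ≠ 0 := sub_ne_zero.mpr hp
  linear_combination (norm := skip) (p₁ - p₂)⁻¹ •
    (h₁.clear_denominators hpq₁ hp₁q₂ - h₂.clear_denominators hp₂q₁ hpq₂)
  match_scalars <;> field_simp <;> ring

lemma residue_eq (hp : p₁ ≠ p₂) (hq : q₁ ≠ q₂) (hpq₁ : p₁ ≠ q₁) (hp₁q₂ : p₁ ≠ q₂)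
    (hp₂q₁ : p₂ ≠ q₁) (hpq₂ : p₂ ≠ q₂) (h₁ : LaxEquation p₁ q₁ p₂ q₂ p₁ P₁ P₂ P₁' P₂')
    (h₂ : LaxEquation p₁ q₁ p₂ q₂ p₂ P₁ P₂ P₁' P₂') :
    P₁ * laxFactor p₂ q₂ q₁ P₂ = laxFactor p₂ q₂ q₁ P₂' * P₁' := by
  have hpq₁' : p₁ - q₁ ≠ 0 := sub_ne_zero.mpr hpq₁
  have hq' : q₁ - q₂ ≠ 0 := sub_ne_zero.mpr hq
  have hdiff : (q₁ - q₂) • (P₁ - P₁') = (p₂ - q₂) • (P₁ * P₂ - P₂' * P₁') := by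
    linear_combination (norm := skip) (p₁ - q₁)⁻¹ • h₁.clear_denominators hpq₁ hp₁q₂ -
      conserved_sum hp hpq₁ hp₁q₂ hp₂q₁ hpq₂ h₁ h₂
    match_scalars <;> field_simp <;> ring
  simp only [laxFactor, mul_sub, sub_mul, smul_mul_assoc, mul_smul_comm, mul_one, one_mul]
  linear_combination (norm := skip) (q₁ - q₂)⁻¹ • hdiff
  match_scalars <;> field_simp <;> ring

end LaxEquation

end LaxFactor

section Transpose

variable {F m : Type*} [Field F] [Fintype m] [DecidableEq m]

lemma transpose_laxFactor (p q lam : F) (P : Matrix m m F) :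
    (laxFactor p q lam P)ᵀ = laxFactor p q lam Pᵀ := by
  simp only [laxFactor, transpose_sub, transpose_one, transpose_smul]

lemma LaxEquation.transpose {p₁ q₁ p₂ q₂ lam : F} {P₁ P₂ P₁' P₂' : Matrix m m F}
    (h : LaxEquation p₁ q₁ p₂ q₂ lam P₁ P₂ P₁' P₂') :
    LaxEquation p₂ q₂ p₁ q₁ lam P₂ᵀ P₁ᵀ P₂'ᵀ P₁'ᵀ := by
  simpa only [LaxEquation, transpose_mul, transpose_laxFactor] using congrArg Matrix.transpose h

end Transpose

section RankOne

variable {F m n k l : Type*} [Field F] [Fintype n]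

lemma exists_eq_vecMulVec_of_rank_le_one {X : Matrix m n F} (hX : X.rank ≤ 1) :
    ∃ u v, X = vecMulVec u v := by
  have := Module.Finite.span_of_finite F (Set.finite_range X.col)
  rw [rank_eq_finrank_span_cols, finrank_le_one_iff] at hX
  obtain ⟨u, hu⟩ := hX
  have hcol (j : n) : ∃ c : F, c • (u : m → F) = X.col j := by
    obtain ⟨c, hc⟩ := hu ⟨X.col j, Submodule.subset_span ⟨j, rfl⟩⟩
    exact ⟨c, congrArg Subtype.val hc⟩
  choose v hv using hcol
  refine ⟨u, v, ext fun i j => ?_⟩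
  rw [vecMulVec_apply, mul_comm]
  exact (congrFun (hv j) i).symm

variable [Fintype m] [Fintype k] [Fintype l]

lemma mul_mul_self_of_rank_le_one {X : Matrix m n F} (hX : X.rank ≤ 1) (Z : Matrix n m F) :
    X * Z * X = (Z * X).trace • X := by
  obtain ⟨u, v, rfl⟩ := exists_eq_vecMulVec_of_rank_le_one hX
  rw [Matrix.mul_assoc, mul_vecMulVec, vecMulVec_mul_vecMulVec, trace_vecMulVec,
    dotProduct_comm, vecMulVec_smul]

/-- The rank-one `K`-projections, over an arbitrary field; `InS` is the real case. -/
def IsRankOneProjection (K : Matrix n m F) (X : Matrix m n F) : Prop :=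
  X * K * X = X ∧ X.rank = 1

namespace IsRankOneProjection

variable {K : Matrix n m F} {X : Matrix m n F}

lemma ne_zero (hX : IsRankOneProjection K X) : X ≠ 0 := by
  rintro rfl
  exact zero_ne_one (rank_zero.symm.trans hX.2)

lemma trace_mul (hX : IsRankOneProjection K X) : (K * X).trace = 1 := by
  have h : (K * X).trace • X = (1 : F) • X := by
    rw [← mul_mul_self_of_rank_le_one hX.2.le, hX.1, one_smul]
  exact smul_left_injective F hX.ne_zero h

lemma transpose (hX : IsRankOneProjection K X) : IsRankOneProjection Kᵀ Xᵀ :=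
  ⟨by rw [← transpose_mul, ← transpose_mul, ← Matrix.mul_assoc, hX.1], X.rank_transpose.trans hX.2⟩

lemma isIdempotentElem_mul_right (hX : IsRankOneProjection K X) : IsIdempotentElem (X * K) := by
  rw [IsIdempotentElem, ← Matrix.mul_assoc, hX.1]

lemma isIdempotentElem_mul_left (hX : IsRankOneProjection K X) : IsIdempotentElem (K * X) := by
  rw [IsIdempotentElem, Matrix.mul_assoc, ← Matrix.mul_assoc X, hX.1]

lemma eq_inv_trace_smul {Y : Matrix k l F} {L : Matrix m k F} {N : Matrix l n F}
    {U : Matrix l n F} {V : Matrix m k F} (hX : IsRankOneProjection K X) (hY : Y.rank ≤ 1)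
    (hcol : X = L * Y * U) (hrow : X = V * Y * N) :
    X = (K * (L * Y * N)).trace⁻¹ • (L * Y * N) := by
  obtain ⟨c, hc⟩ : ∃ c : F, X = c • (L * Y * N) := by
    refine ⟨(U * K * V * Y).trace, ?_⟩
    calc X = L * Y * U * K * (V * Y * N) := by rw [← hcol, ← hrow, hX.1]
      _ = L * (Y * (U * K * V) * Y) * N := by simp only [Matrix.mul_assoc]
      _ = (U * K * V * Y).trace • (L * Y * N) := by
        rw [mul_mul_self_of_rank_le_one hY, Matrix.mul_smul, Matrix.smul_mul]
  have htrace : c * (K * (L * Y * N)).trace = 1 := by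
    rw [← smul_eq_mul, ← trace_smul, ← Matrix.mul_smul, ← hc, hX.trace_mul]
  rwa [← eq_inv_of_mul_eq_one_left htrace]

end IsRankOneProjection

end RankOne

section Factorization

variable {F m n : Type*} [Field F] [Fintype m] [Fintype n] {K : Matrix n m F}
  {p₁ q₁ p₂ q₂ : F} {X₁ X₂ X₁' X₂' : Matrix m n F}

lemma col_factorization_of_laxEquation [DecidableEq m] (hp : p₁ ≠ p₂) (hpq₁ : p₁ ≠ q₁)
    (hp₁q₂ : p₁ ≠ q₂) (hX₂ : IsIdempotentElem (X₂ * K)) (hX₁' : X₁' * K * X₁' = X₁')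
    (h : LaxEquation p₁ q₁ p₂ q₂ p₁ (X₁ * K) (X₂ * K) (X₁' * K) (X₂' * K)) :
    X₁' = laxFactor q₂ p₂ p₁ (X₂ * K) * X₁ * (K * laxFactor p₂ q₂ p₁ (X₂ * K) * X₁') := by
  have hinv : laxFactor q₂ p₂ p₁ (X₂ * K) * laxFactor p₂ q₂ p₁ (X₂ * K) = 1 :=
    laxFactor_mul_laxFactor_swap hX₂ hp₁q₂ hp
  have hzero : (1 - X₁ * K) * laxFactor p₂ q₂ p₁ (X₂ * K) * X₁' = 0 := by
    rw [LaxEquation, laxFactor_self hpq₁, laxFactor_self hpq₁] at h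
    rw [h, Matrix.mul_assoc, Matrix.sub_mul, Matrix.one_mul, hX₁', sub_self, Matrix.mul_zero]
  have hfix : laxFactor p₂ q₂ p₁ (X₂ * K) * X₁' =
      X₁ * K * laxFactor p₂ q₂ p₁ (X₂ * K) * X₁' := by
    rwa [Matrix.sub_mul, Matrix.sub_mul, Matrix.one_mul, sub_eq_zero] at hzero
  calc X₁' = laxFactor q₂ p₂ p₁ (X₂ * K) * (laxFactor p₂ q₂ p₁ (X₂ * K) * X₁') := by
        rw [← Matrix.mul_assoc, hinv, Matrix.one_mul]
    _ = laxFactor q₂ p₂ p₁ (X₂ * K) * X₁ * (K * laxFactor p₂ q₂ p₁ (X₂ * K) * X₁') := by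
        rw [hfix]
        simp only [Matrix.mul_assoc]

lemma row_factorization_of_residue_eq [DecidableEq n] (hq : q₁ ≠ q₂) (hp₂q₁ : p₂ ≠ q₁)
    (hX₁' : X₁' * K * X₁' = X₁') (hX₂' : IsIdempotentElem (K * X₂'))
    (h : K * X₁ * laxFactor p₂ q₂ q₁ (K * X₂) = laxFactor p₂ q₂ q₁ (K * X₂') * (K * X₁')) :
    X₁' = X₁' * laxFactor q₂ p₂ q₁ (K * X₂') * K * X₁ * laxFactor p₂ q₂ q₁ (K * X₂) := by
  have hinv : laxFactor q₂ p₂ q₁ (K * X₂') * laxFactor p₂ q₂ q₁ (K * X₂') = 1 :=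
    laxFactor_mul_laxFactor_swap hX₂' hq hp₂q₁.symm
  calc X₁' = X₁' * (laxFactor q₂ p₂ q₁ (K * X₂') * laxFactor p₂ q₂ q₁ (K * X₂')) *
        (K * X₁') := by rw [hinv, Matrix.mul_one, ← Matrix.mul_assoc, hX₁']
    _ = X₁' * laxFactor q₂ p₂ q₁ (K * X₂') * (K * X₁ * laxFactor p₂ q₂ q₁ (K * X₂)) := by
        rw [h]
        simp only [Matrix.mul_assoc]
    _ = X₁' * laxFactor q₂ p₂ q₁ (K * X₂') * K * X₁ * laxFactor p₂ q₂ q₁ (K * X₂) := by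
        simp only [Matrix.mul_assoc]

end Factorization

section YangBaxter

variable {F m n : Type*} [Field F] [Fintype m] [Fintype n]

/-- The normalization `α₁₂⁻¹` of the Yang–Baxter map, over an arbitrary field; `adenom` is the
real case. -/
def yangBaxterDenom (K : Matrix n m F) (p₁ q₁ p₂ q₂ : F) (X₁ X₂ : Matrix m n F) : F :=
  1 - (p₁ - q₁) * (p₂ - q₂) / ((p₂ - p₁) * (q₂ - q₁)) * (K * X₁ * K * X₂).trace

lemma yangBaxterDenom_transpose (K : Matrix n m F) (p₁ q₁ p₂ q₂ : F) (X₁ X₂ : Matrix m n F) :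
    yangBaxterDenom Kᵀ p₂ q₂ p₁ q₁ X₂ᵀ X₁ᵀ = yangBaxterDenom K p₁ q₁ p₂ q₂ X₁ X₂ := by
  have htrace : (Kᵀ * X₂ᵀ * Kᵀ * X₁ᵀ).trace = (K * X₁ * K * X₂).trace :=
    calc (Kᵀ * X₂ᵀ * Kᵀ * X₁ᵀ).trace = (X₁ * K * X₂ * K)ᵀ.trace := by
          simp only [transpose_mul, Matrix.mul_assoc]
      _ = (X₁ * K * X₂ * K).trace := trace_transpose _
      _ = (K * X₁ * K * X₂).trace := by
          rw [trace_mul_comm]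
          simp only [Matrix.mul_assoc]
  rw [yangBaxterDenom, yangBaxterDenom, htrace, mul_comm (p₂ - q₂), ← neg_sub p₂ p₁,
    ← neg_sub q₂ q₁, neg_mul_neg]

variable [DecidableEq m] [DecidableEq n]

/-- The Yang–Baxter map `R(p₁, q₁; p₂, q₂)`, over an arbitrary field and with its four linear
factors written as Lax factors; `Rmap` is the real case. -/
def yangBaxterMap (K : Matrix n m F) (p₁ q₁ p₂ q₂ : F) (X : Matrix m n F × Matrix m n F) :
    Matrix m n F × Matrix m n F :=
  ((yangBaxterDenom K p₁ q₁ p₂ q₂ X.1 X.2)⁻¹ •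
      (laxFactor q₂ p₂ p₁ (X.2 * K) * X.1 * laxFactor p₂ q₂ q₁ (K * X.2)),
    (yangBaxterDenom K p₁ q₁ p₂ q₂ X.1 X.2)⁻¹ •
      (laxFactor p₁ q₁ q₂ (X.1 * K) * X.2 * laxFactor q₁ p₁ p₂ (K * X.1)))

lemma Rmap_eq_yangBaxterMap {m n : ℕ} (K : Matrix (Fin n) (Fin m) ℝ) (p₁ q₁ p₂ q₂ : ℝ)
    (X : Mat m n × Mat m n) : Rmap K p₁ q₁ p₂ q₂ X = yangBaxterMap K p₁ q₁ p₂ q₂ X := by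
  have h₁ : (q₂ - p₂) / (p₁ - p₂) = (p₂ - q₂) / (p₂ - p₁) := by
    rw [← neg_sub p₂ q₂, ← neg_sub p₂ p₁, neg_div_neg_eq]
  have h₂ : (q₁ - p₁) / (p₂ - p₁) = (p₁ - q₁) / (p₁ - p₂) := by
    rw [← neg_sub p₁ q₁, ← neg_sub p₁ p₂, neg_div_neg_eq]
  simp only [Rmap, yangBaxterMap, adenom, yangBaxterDenom, laxFactor, h₁, h₂]

variable {K : Matrix n m F} {p₁ q₁ p₂ q₂ : F} {X₁ X₂ X₁' X₂' : Matrix m n F}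

lemma trace_mul_sub_smul_mul_sub_smul {Y : Matrix m n F} (hY : Y * K * Y = Y)
    (X : Matrix m n F) (a b : F) :
    (K * ((1 - a • (Y * K)) * X * (1 - b • (K * Y)))).trace =
      (K * X).trace - (a + b - a * b) * (K * X * K * Y).trace := by
  have hcycle : (K * (Y * (K * X))).trace = (K * X * K * Y).trace := by
    rw [← Matrix.mul_assoc, trace_mul_comm]
    simp only [Matrix.mul_assoc]
  have habsorb : (K * (Y * (K * (X * (K * Y))))).trace = (K * X * K * Y).trace :=
    calc (K * (Y * (K * (X * (K * Y))))).trace = (K * X * K * (Y * K * Y)).trace := by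
          rw [← Matrix.mul_assoc, trace_mul_comm]
          simp only [Matrix.mul_assoc]
      _ = (K * X * K * Y).trace := by rw [hY]
  simp only [Matrix.mul_sub, Matrix.sub_mul, Matrix.mul_smul, Matrix.smul_mul, Matrix.mul_one,
    Matrix.one_mul, Matrix.mul_assoc, trace_sub, trace_smul, smul_eq_mul] at hcycle habsorb ⊢
  rw [hcycle, habsorb]
  ring

lemma trace_yangBaxter_fst (hp : p₁ ≠ p₂) (hq : q₁ ≠ q₂) (hX₁ : IsRankOneProjection K X₁)
    (hX₂ : X₂ * K * X₂ = X₂) :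
    (K * (laxFactor q₂ p₂ p₁ (X₂ * K) * X₁ * laxFactor p₂ q₂ q₁ (K * X₂))).trace =
      yangBaxterDenom K p₁ q₁ p₂ q₂ X₁ X₂ := by
  have hp' : p₁ - p₂ ≠ 0 := sub_ne_zero.mpr hp
  have hp'' : p₂ - p₁ ≠ 0 := sub_ne_zero.mpr hp.symm
  have hq' : q₁ - q₂ ≠ 0 := sub_ne_zero.mpr hq
  have hq'' : q₂ - q₁ ≠ 0 := sub_ne_zero.mpr hq.symm
  rw [laxFactor, laxFactor, trace_mul_sub_smul_mul_sub_smul hX₂, hX₁.trace_mul, yangBaxterDenom]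
  congr 2
  field_simp
  ring

lemma fst_eq_yangBaxterMap_fst (hdist : [p₁, q₁, p₂, q₂].Nodup)
    (hX₁ : IsRankOneProjection K X₁) (hX₂ : IsRankOneProjection K X₂)
    (hX₁' : IsRankOneProjection K X₁') (hX₂' : IsRankOneProjection K X₂')
    (hcol₁ : LaxEquation p₁ q₁ p₂ q₂ p₁ (X₁ * K) (X₂ * K) (X₁' * K) (X₂' * K))
    (hrow₁ : LaxEquation p₁ q₁ p₂ q₂ p₁ (K * X₁) (K * X₂) (K * X₁') (K * X₂'))
    (hrow₂ : LaxEquation p₁ q₁ p₂ q₂ p₂ (K * X₁) (K * X₂) (K * X₁') (K * X₂')) :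
    X₁' = (yangBaxterMap K p₁ q₁ p₂ q₂ (X₁, X₂)).1 := by
  obtain ⟨⟨hpq₁, hp, hp₁q₂⟩, ⟨hq₁p₂, hq⟩, hpq₂⟩ := by simpa using hdist
  have hres := LaxEquation.residue_eq hp hq hpq₁ hp₁q₂ (Ne.symm hq₁p₂) hpq₂ hrow₁ hrow₂
  have hcol := col_factorization_of_laxEquation hp hpq₁ hp₁q₂ hX₂.isIdempotentElem_mul_right
    hX₁'.1 hcol₁
  have hrow := row_factorization_of_residue_eq hq (Ne.symm hq₁p₂) hX₁'.1
    hX₂'.isIdempotentElem_mul_left hres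
  rw [yangBaxterMap, ← trace_yangBaxter_fst hp hq hX₁ hX₂.1]
  exact hX₁'.eq_inv_trace_smul hX₁.2.le hcol hrow

lemma transpose_yangBaxterMap_fst (K : Matrix n m F) (p₁ q₁ p₂ q₂ : F) (X₁ X₂ : Matrix m n F) :
    (yangBaxterMap Kᵀ p₂ q₂ p₁ q₁ (X₂ᵀ, X₁ᵀ)).1ᵀ = (yangBaxterMap K p₁ q₁ p₂ q₂ (X₁, X₂)).2 := by
  simp only [yangBaxterMap, yangBaxterDenom_transpose, transpose_smul, transpose_mul,
    transpose_laxFactor, transpose_transpose, Matrix.mul_assoc]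

theorem lax_representation_determines_R_general (hdist : [p₁, q₁, p₂, q₂].Nodup)
    (hX₁ : IsRankOneProjection K X₁) (hX₂ : IsRankOneProjection K X₂)
    (hX₁' : IsRankOneProjection K X₁') (hX₂' : IsRankOneProjection K X₂')
    (hLax : ∀ lam ∈ ({p₁, p₂} : Set F),
      LaxEquation p₁ q₁ p₂ q₂ lam (X₁ * K) (X₂ * K) (X₁' * K) (X₂' * K) ∧
      LaxEquation p₁ q₁ p₂ q₂ lam (K * X₁) (K * X₂) (K * X₁') (K * X₂')) :
    yangBaxterDenom K p₁ q₁ p₂ q₂ X₁ X₂ ≠ 0 ∧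
      (X₁', X₂') = yangBaxterMap K p₁ q₁ p₂ q₂ (X₁, X₂) := by
  obtain ⟨hcol₁, hrow₁⟩ := hLax p₁ (.inl rfl)
  obtain ⟨hcol₂, hrow₂⟩ := hLax p₂ (.inr rfl)
  have hfst := fst_eq_yangBaxterMap_fst hdist hX₁ hX₂ hX₁' hX₂' hcol₁ hrow₁ hrow₂
  have hsnd : X₂'ᵀ = (yangBaxterMap Kᵀ p₂ q₂ p₁ q₁ (X₂ᵀ, X₁ᵀ)).1 := by
    have hdist' : [p₂, q₂, p₁, q₁].Nodup := (List.nodup_append_comm (l₁ := [p₁, q₁])).mp hdist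
    apply fst_eq_yangBaxterMap_fst hdist' hX₂.transpose hX₁.transpose hX₂'.transpose
      hX₁'.transpose <;> simp only [← transpose_mul]
    exacts [hrow₂.transpose, hcol₂.transpose, hcol₁.transpose]
  refine ⟨fun hzero => hX₁'.ne_zero ?_, Prod.ext hfst ?_⟩
  · rw [hfst, yangBaxterMap, hzero, _root_.inv_zero, zero_smul]
  · rw [← transpose_yangBaxterMap_fst, ← hsnd, transpose_transpose]

end YangBaxter

/-- The refactorization (Lax) equations determine the Yang–Baxter map `R`. -/
theorem lax_representation_determines_R
    (m n : ℕ) (hm : 0 < m) (hn : 0 < n)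
    (K : Matrix (Fin n) (Fin m) ℝ) (hK : K.rank = min n m)
    (p1 q1 p2 q2 : ℝ)
    (hdist : List.Pairwise (· ≠ ·) [p1, q1, p2, q2])
    (X1 X2 X1' X2' : Mat m n)
    (hX1 : InS K X1) (hX2 : InS K X2) (hX1' : InS K X1') (hX2' : InS K X2')
    (hden : (p2 - p1) * (q2 - q1) - (p1 - q1) * (p2 - q2) * (K * X1 * K * X2).trace ≠ 0)
    (hLax : ∀ lam : ℝ, lam ≠ q1 → lam ≠ q2 →
      Amat K p1 q1 lam X1 * Amat K p2 q2 lam X2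
        = Amat K p2 q2 lam X2' * Amat K p1 q1 lam X1' ∧
      Atil K p1 q1 lam X1 * Atil K p2 q2 lam X2
        = Atil K p2 q2 lam X2' * Atil K p1 q1 lam X1') :
    (X1', X2') = Rmap K p1 q1 p2 q2 (X1, X2) := by
  rw [Rmap_eq_yangBaxterMap]
  exact (lax_representation_determines_R_general hdist hX1 hX2 hX1' hX2'
    fun lam hlam => hLax lam (by grind) (by grind)).2
end

section
/- Let p1, q1, p2, q2 be pairwise distinct reals, X1, X2 ∈ S, with α_{12}(X1,X2) well defined and nonzero, and let (X1',X2') = R(p1,q1;p2,q2)(X1,X2). Then tr(X1' K X2' K) = tr(X1 K X2 K); in particular, α_{12} is an invariant of the map R: 1 − ((p1−q1)(p2−q2))/((p1−p2)(q1−q2))·tr(X1' K X2' K) = α_{12}(X1,X2)^{-1}. -/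
open Matrix

/-!
Put `P = X1 K` and `Q = X2 K`. Both are idempotent, and `P Q P = t P` with `t = tr (P Q)` because
`P` has rank one. Up to the factor `D⁻¹ = α₁₂`, right multiplication by `K` turns the two
components of `R` into `(1 − a Q) P (1 − b Q)` and `(1 − c P) Q (1 − d P)`. In the trace of their
product the two inner factors collapse, `P (1 − b Q) (1 − c P) Q = (1 − b − c + b c t) P Q`, and
by cyclicity the two outer ones collapse in the same way. For the coefficients of `R` the
resulting scalars are `(p1 − p2) / (q1 − q2) · D` and `(q1 − q2) / (p1 − p2) · D`, whose product
`D²` cancels the normalization.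
-/

section Dressing

variable {R A : Type*} [CommRing R] [Ring A] [Algebra R A]

/-- The two-sided dressing `(1 − a Q) P (1 − b Q)` of `P` by `Q`. Both components of the
Yang–Baxter map have this form, up to a scalar, once they are multiplied by `K`. -/
def dressing (a b : R) (Q P : A) : A :=
  (1 - a • Q) * P * (1 - b • Q)

lemma mul_one_sub_smul_mul_one_sub_smul_mul {P Q : A} (hP : IsIdempotentElem P)
    (hQ : IsIdempotentElem Q) {t : R} (hPQ : P * Q * (P * Q) = t • (P * Q)) (b c : R) :
    P * (1 - b • Q) * ((1 - c • P) * Q) = (1 - b - c + b * c * t) • (P * Q) := by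
  have hPPQ : P * (P * Q) = P * Q := by rw [← mul_assoc, hP.eq]
  have hPQQ : P * Q * Q = P * Q := by rw [mul_assoc, hQ.eq]
  simp only [mul_sub, sub_mul, mul_one, one_mul, mul_smul_comm, smul_mul_assoc, hPPQ, hPQQ, hPQ]
  module

variable {ι κ : Type*} [Fintype ι] [DecidableEq ι] [Fintype κ] [DecidableEq κ]

lemma trace_dressing_mul_dressing {P Q : Matrix ι ι R} (hP : IsIdempotentElem P)
    (hQ : IsIdempotentElem Q) {t : R} (hPQP : P * Q * P = t • P) (a b c d : R) :
    (dressing a b Q P * dressing c d P Q).trace =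
      (1 - b - c + b * c * t) * (1 - d - a + d * a * t) * (P * Q).trace := by
  have hPQ : P * Q * (P * Q) = t • (P * Q) := by
    rw [← mul_assoc, hPQP, smul_mul_assoc]
  have hQP : Q * P * (Q * P) = t • (Q * P) := by
    rw [mul_assoc, ← mul_assoc P, hPQP, mul_smul_comm]
  calc (dressing a b Q P * dressing c d P Q).trace
    _ = ((1 - a • Q) * (P * (1 - b • Q) * ((1 - c • P) * Q)) * (1 - d • P)).trace := by
      simp only [dressing, mul_assoc]
    _ = (1 - b - c + b * c * t) * ((1 - a • Q) * (P * Q) * (1 - d • P)).trace := by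
      rw [mul_one_sub_smul_mul_one_sub_smul_mul hP hQ hPQ, mul_smul_comm, smul_mul_assoc,
        trace_smul, smul_eq_mul]
    _ = (1 - b - c + b * c * t) * (Q * (1 - d • P) * ((1 - a • Q) * P)).trace := by
      rw [← mul_assoc (1 - a • Q), mul_assoc _ Q, trace_mul_comm (_ * P)]
    _ = (1 - b - c + b * c * t) * (1 - d - a + d * a * t) * (P * Q).trace := by
      rw [mul_one_sub_smul_mul_one_sub_smul_mul hQ hP hQP, trace_smul, smul_eq_mul,
        trace_mul_comm Q P, mul_assoc (1 - b - c + b * c * t)]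

lemma one_sub_smul_mul_mul_one_sub_smul_mul_eq_dressing (K : Matrix κ ι R) (X Y : Matrix ι κ R)
    (a b : R) :
    (1 - a • (Y * K)) * X * (1 - b • (K * Y)) * K = dressing a b (Y * K) (X * K) := by
  have hK : (1 - b • (K * Y)) * K = K * (1 - b • (Y * K)) := by
    simp only [Matrix.sub_mul, Matrix.mul_sub, Matrix.one_mul, Matrix.mul_one, Matrix.smul_mul,
      Matrix.mul_smul, Matrix.mul_assoc]
  simp only [dressing, Matrix.mul_assoc, hK]

end Dressing

section RankOne

variable {F ι κ : Type*} [Field F] [Fintype κ]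

lemma exists_eq_vecMulVec_of_rank_le_one_s5 {A : Matrix ι κ F} (hA : A.rank ≤ 1) :
    ∃ (u : ι → F) (v : κ → F), A = vecMulVec u v := by
  classical
  obtain ⟨u, hu⟩ := finrank_le_one_iff.mp hA
  choose v hv using fun j ↦ hu ⟨A *ᵥ Pi.single j 1, Pi.single j 1, rfl⟩
  refine ⟨u, v, ?_⟩
  ext i j
  simpa [vecMulVec_apply, mul_comm] using (congrFun (congrArg Subtype.val (hv j)) i).symm

lemma mul_mul_self_eq_trace_smul_of_rank_le_one [Fintype ι] {A : Matrix ι κ F} (hA : A.rank ≤ 1)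
    (B : Matrix κ ι F) : A * B * A = (A * B).trace • A := by
  obtain ⟨u, v, rfl⟩ := exists_eq_vecMulVec_of_rank_le_one_s5 hA
  rw [vecMulVec_mul, vecMulVec_mul_vecMulVec, trace_vecMulVec, dotProduct_comm, vecMulVec_smul]

end RankOne

section Invariance

variable {F : Type*} [Field F]

lemma dressing_coeff_mul_eq_sq {p1 q1 p2 q2 : F} (hp : p1 ≠ p2) (hq : q1 ≠ q2) (t : F) :
    (1 - (p2 - q2) / (q1 - q2) - (p1 - q1) / (q2 - q1) +
        (p2 - q2) / (q1 - q2) * ((p1 - q1) / (q2 - q1)) * t) *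
      (1 - (p1 - q1) / (p1 - p2) - (p2 - q2) / (p2 - p1) +
        (p1 - q1) / (p1 - p2) * ((p2 - q2) / (p2 - p1)) * t) =
      (1 - (p1 - q1) * (p2 - q2) / ((p2 - p1) * (q2 - q1)) * t) ^ 2 := by
  have hp' : p1 - p2 ≠ 0 := sub_ne_zero.mpr hp
  have hq' : q1 - q2 ≠ 0 := sub_ne_zero.mpr hq
  rw [← neg_sub p1 p2, ← neg_sub q1 q2]
  field_simp
  ring

theorem alpha_is_invariant_of_R_general {ι κ : Type*} [Fintype ι] [DecidableEq ι] [Fintype κ]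
    [DecidableEq κ] (K : Matrix κ ι F) {p1 q1 p2 q2 : F} (hp : p1 ≠ p2) (hq : q1 ≠ q2)
    {X1 X2 Y1 Y2 : Matrix ι κ F} (hX1 : X1 * K * X1 = X1) (hrank : X1.rank ≤ 1)
    (hX2 : X2 * K * X2 = X2) {D : F}
    (hD : D = 1 - (p1 - q1) * (p2 - q2) / ((p2 - p1) * (q2 - q1)) * (K * X1 * K * X2).trace)
    (hD0 : D ≠ 0)
    (hY1 : Y1 = D⁻¹ • ((1 - ((p2 - q2) / (p2 - p1)) • (X2 * K)) * X1 *
      (1 - ((p2 - q2) / (q1 - q2)) • (K * X2))))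
    (hY2 : Y2 = D⁻¹ • ((1 - ((p1 - q1) / (q2 - q1)) • (X1 * K)) * X2 *
      (1 - ((p1 - q1) / (p1 - p2)) • (K * X1)))) :
    (Y1 * K * Y2 * K).trace = (X1 * K * X2 * K).trace ∧
      1 - (p1 - q1) * (p2 - q2) / ((p1 - p2) * (q1 - q2)) * (Y1 * K * Y2 * K).trace = D := by
  have hP : IsIdempotentElem (X1 * K) := by rw [IsIdempotentElem, ← Matrix.mul_assoc, hX1]
  have hQ : IsIdempotentElem (X2 * K) := by rw [IsIdempotentElem, ← Matrix.mul_assoc, hX2]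
  have hPQP := mul_mul_self_eq_trace_smul_of_rank_le_one
    ((rank_mul_le_left X1 K).trans hrank) (X2 * K)
  have hcyc : (K * X1 * K * X2).trace = (X1 * K * (X2 * K)).trace := by
    rw [Matrix.mul_assoc, Matrix.mul_assoc, trace_mul_comm]
    simp only [Matrix.mul_assoc]
  rw [hcyc] at hD
  have hY1K : Y1 * K = D⁻¹ •
      dressing ((p2 - q2) / (p2 - p1)) ((p2 - q2) / (q1 - q2)) (X2 * K) (X1 * K) := by
    rw [hY1, Matrix.smul_mul, one_sub_smul_mul_mul_one_sub_smul_mul_eq_dressing]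
  have hY2K : Y2 * K = D⁻¹ •
      dressing ((p1 - q1) / (q2 - q1)) ((p1 - q1) / (p1 - p2)) (X1 * K) (X2 * K) := by
    rw [hY2, Matrix.smul_mul, one_sub_smul_mul_mul_one_sub_smul_mul_eq_dressing]
  have htrace : (Y1 * K * Y2 * K).trace = (X1 * K * (X2 * K)).trace := by
    rw [Matrix.mul_assoc _ Y2, hY1K, hY2K, smul_mul_smul_comm, trace_smul,
      trace_dressing_mul_dressing hP hQ hPQP, dressing_coeff_mul_eq_sq hp hq, ← hD, smul_eq_mul]
    field_simp
  have hdenom : (p1 - p2) * (q1 - q2) = (p2 - p1) * (q2 - q1) := by ring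
  exact ⟨htrace.trans (by rw [← Matrix.mul_assoc]), by rw [htrace, hdenom, hD]⟩

end Invariance

/-- `tr(X1' K X2' K)` is invariant under `R`; hence `α₁₂` is an invariant. -/
theorem alpha_is_invariant_of_R
    (m n : ℕ) (hm : 0 < m) (hn : 0 < n)
    (K : Matrix (Fin n) (Fin m) ℝ) (hK : K.rank = min n m)
    (p1 q1 p2 q2 : ℝ)
    (hdist : List.Pairwise (· ≠ ·) [p1, q1, p2, q2])
    (X1 X2 : Mat m n) (hX1 : InS K X1) (hX2 : InS K X2)
    (ha : adenom K p1 q1 p2 q2 X1 X2 ≠ 0) :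
    ((Rmap K p1 q1 p2 q2 (X1, X2)).1 * K * (Rmap K p1 q1 p2 q2 (X1, X2)).2 * K).trace
      = (X1 * K * X2 * K).trace ∧
    1 - (p1 - q1) * (p2 - q2) / ((p1 - p2) * (q1 - q2)) *
        ((Rmap K p1 q1 p2 q2 (X1, X2)).1 * K * (Rmap K p1 q1 p2 q2 (X1, X2)).2 * K).trace
      = adenom K p1 q1 p2 q2 X1 X2 := by
  obtain ⟨⟨-, hp, -⟩, ⟨-, hq⟩, -⟩ : (p1 ≠ q1 ∧ p1 ≠ p2 ∧ p1 ≠ q2) ∧ (q1 ≠ p2 ∧ q1 ≠ q2) ∧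
      p2 ≠ q2 := by simpa using hdist
  exact alpha_is_invariant_of_R_general K hp hq hX1.1 hX1.2.le hX2.1 rfl ha rfl rfl
end

section
/- Let p1, q1, p2, q2 be pairwise distinct reals and X1, X2 ∈ S. Then tr[B2(p1,X2) X1 Ã2(q1,X2) K] = tr[A1(q2,X1) X2 B̃1(p2,X1) K] = 1 − ((p1−q1)(p2−q2))/((p2−p1)(q2−q1))·tr(K X1 K X2), i.e., both traces equal α_{12}(X1,X2)^{-1}. -/
open Matrix

/-!
For a `K`-projection `Y`, the matrix `Q = Y K` is idempotent. Since `K Y` intertwines with `Y K`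
through `K`, each trace takes the form `tr ((1 + b Q) P (1 + a Q))` with `P = X K`. Cycling the
right factor to the front, idempotency of `Q` collapses `(1 + a Q) (1 + b Q)` to
`1 + (a + b + a b) Q`, so the trace is `tr P + (a + b + a b) tr (P Q)`. The trace of the
idempotent `P` is its rank, which is that of `X`, and `a + b + a b` is a rational function of the
spectral parameters that is symmetric under exchanging the indices `1` and `2`.
-/

section KProjection

variable {m n : Type*} [Fintype m] [Fintype n]

theorem isIdempotentElem_mul_of_mul_mul_eq_self {R : Type*} [NonUnitalSemiring R]
    {K : Matrix n m R} {X : Matrix m n R} (hX : X * K * X = X) : IsIdempotentElem (X * K) := by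
  rw [IsIdempotentElem, ← Matrix.mul_assoc, hX]

theorem rank_mul_eq_of_mul_mul_eq_self {R : Type*} [CommSemiring R] [StrongRankCondition R]
    {K : Matrix n m R} {X : Matrix m n R} (hX : X * K * X = X) : (X * K).rank = X.rank :=
  le_antisymm (rank_mul_le_left X K) <| calc
    X.rank = (X * K * X).rank := by rw [hX]
    _ ≤ (X * K).rank := rank_mul_le_left (X * K) X

theorem trace_eq_rank_of_isIdempotentElem {F : Type*} [Field F] {P : Matrix m m F}
    (hP : IsIdempotentElem P) : P.trace = P.rank := by
  classical
  have hP' : IsIdempotentElem (toLin' P) := hP.map toLinAlgEquiv'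
  rw [rank, ← toLin'_apply', ← trace_toLin'_eq,
    (LinearMap.IsIdempotentElem.isProj_range _ hP').trace]

theorem trace_mul_eq_rank_of_mul_mul_eq_self {F : Type*} [Field F]
    {K : Matrix n m F} {X : Matrix m n F} (hX : X * K * X = X) : (X * K).trace = X.rank := by
  rw [trace_eq_rank_of_isIdempotentElem (isIdempotentElem_mul_of_mul_mul_eq_self hX),
    rank_mul_eq_of_mul_mul_eq_self hX]

end KProjection

section Sandwich

theorem one_add_smul_mul_one_add_smul_of_isIdempotentElem {R A : Type*}
    [CommSemiring R] [Semiring A] [Algebra R A] {e : A} (he : IsIdempotentElem e) (a b : R) :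
    (1 + a • e) * (1 + b • e) = 1 + (a + b + a * b) • e := by
  simp only [mul_add, add_mul, one_mul, mul_one, smul_mul_smul_comm, he.eq, add_smul]
  abel

variable {m n R : Type*} [Fintype m] [DecidableEq m] [CommSemiring R]

theorem trace_one_add_smul_mul_mul_one_add_smul {Q : Matrix m m R} (hQ : IsIdempotentElem Q)
    (P : Matrix m m R) (a b : R) :
    ((1 + b • Q) * P * (1 + a • Q)).trace = P.trace + (a + b + a * b) * (P * Q).trace := by
  rw [trace_mul_comm, ← Matrix.mul_assoc, one_add_smul_mul_one_add_smul_of_isIdempotentElem hQ,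
    trace_mul_comm, mul_add, mul_one, mul_smul_comm, trace_add, trace_smul, smul_eq_mul]

variable [Fintype n] [DecidableEq n]

theorem one_add_smul_mul_mul_comm (K : Matrix n m R) (Y : Matrix m n R) (a : R) :
    (1 + a • (K * Y)) * K = K * (1 + a • (Y * K)) := by
  rw [Matrix.add_mul, Matrix.mul_add, Matrix.one_mul, Matrix.mul_one, Matrix.smul_mul,
    Matrix.mul_smul, Matrix.mul_assoc]

theorem trace_one_add_smul_mul_mul_one_add_smul_mul {K : Matrix n m R} {Y : Matrix m n R}
    (hY : Y * K * Y = Y) (X : Matrix m n R) (a b : R) :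
    ((1 + b • (Y * K)) * X * (1 + a • (K * Y)) * K).trace =
      (X * K).trace + (a + b + a * b) * (K * X * K * Y).trace := calc
  _ = ((1 + b • (Y * K)) * (X * K) * (1 + a • (Y * K))).trace := by
    simp only [Matrix.mul_assoc, one_add_smul_mul_mul_comm]
  _ = (X * K).trace + (a + b + a * b) * (X * K * (Y * K)).trace :=
    trace_one_add_smul_mul_mul_one_add_smul (isIdempotentElem_mul_of_mul_mul_eq_self hY) _ a b
  _ = (X * K).trace + (a + b + a * b) * (K * X * K * Y).trace := by
    rw [← Matrix.mul_assoc, trace_mul_comm (X * K * Y) K]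
    simp only [Matrix.mul_assoc]

end Sandwich

theorem spectral_coeff_add_add_mul {F : Type*} [Field F] {p₁ q₁ p₂ q₂ : F}
    (hp : p₁ ≠ p₂) (hq : q₁ ≠ q₂) :
    -((p₂ - q₂) / (q₁ - q₂)) + (p₂ - q₂) / (p₁ - p₂) +
        -((p₂ - q₂) / (q₁ - q₂)) * ((p₂ - q₂) / (p₁ - p₂)) =
      -((p₁ - q₁) * (p₂ - q₂) / ((p₂ - p₁) * (q₂ - q₁))) := by
  have hp' := sub_ne_zero.2 hp
  have hq' := sub_ne_zero.2 hq
  rw [← neg_sub p₁ p₂, ← neg_sub q₁ q₂]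
  field_simp
  ring

theorem trace_identities_alpha_general {m n F : Type*} [Fintype m] [DecidableEq m]
    [Fintype n] [DecidableEq n] [Field F] {K : Matrix n m F} {X₁ X₂ : Matrix m n F}
    (hX₁ : X₁ * K * X₁ = X₁) (hX₂ : X₂ * K * X₂ = X₂)
    {p₁ q₁ p₂ q₂ : F} (hp : p₁ ≠ p₂) (hq : q₁ ≠ q₂) :
    ((1 + ((p₂ - q₂) / (p₁ - p₂)) • (X₂ * K)) * X₁ *
        (1 - ((p₂ - q₂) / (q₁ - q₂)) • (K * X₂)) * K).trace =
      (X₁.rank : F) - (p₁ - q₁) * (p₂ - q₂) / ((p₂ - p₁) * (q₂ - q₁)) *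
        (K * X₁ * K * X₂).trace ∧
    ((1 - ((p₁ - q₁) / (q₂ - q₁)) • (X₁ * K)) * X₂ *
        (1 + ((p₁ - q₁) / (p₂ - p₁)) • (K * X₁)) * K).trace =
      (X₂.rank : F) - (p₁ - q₁) * (p₂ - q₂) / ((p₂ - p₁) * (q₂ - q₁)) *
        (K * X₁ * K * X₂).trace := by
  simp only [sub_eq_add_neg (1 : Matrix _ _ F), ← neg_smul]
  constructor
  · rw [trace_one_add_smul_mul_mul_one_add_smul_mul hX₂,
      trace_mul_eq_rank_of_mul_mul_eq_self hX₁, spectral_coeff_add_add_mul hp hq]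
    ring
  · have trace_swap : (K * X₂ * K * X₁).trace = (K * X₁ * K * X₂).trace := by
      rw [Matrix.mul_assoc, trace_mul_comm, ← Matrix.mul_assoc]
    rw [trace_one_add_smul_mul_mul_one_add_smul_mul hX₁,
      trace_mul_eq_rank_of_mul_mul_eq_self hX₂, trace_swap,
      add_comm ((p₁ - q₁) / _), mul_comm ((p₁ - q₁) / _),
      spectral_coeff_add_add_mul hp.symm hq.symm, ← neg_sub p₁ p₂, ← neg_sub q₁ q₂]
    ring

/-- `tr[B₂(p1,X2) X1 Ã₂(q1,X2) K] = tr[A₁(q2,X1) X2 B̃₁(p2,X1) K] = α₁₂⁻¹`. -/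
theorem trace_identities_alpha
    (m n : ℕ) (hm : 0 < m) (hn : 0 < n)
    (K : Matrix (Fin n) (Fin m) ℝ) (hK : K.rank = min n m)
    (p1 q1 p2 q2 : ℝ)
    (hdist : List.Pairwise (· ≠ ·) [p1, q1, p2, q2])
    (X1 X2 : Mat m n) (hX1 : InS K X1) (hX2 : InS K X2) :
    (Bmat K p2 q2 p1 X2 * X1 * Atil K p2 q2 q1 X2 * K).trace
      = 1 - (p1 - q1) * (p2 - q2) / ((p2 - p1) * (q2 - q1)) * (K * X1 * K * X2).trace ∧
    (Amat K p1 q1 q2 X1 * X2 * Btil K p1 q1 p2 X1 * K).trace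
      = 1 - (p1 - q1) * (p2 - q2) / ((p2 - p1) * (q2 - q1)) * (K * X1 * K * X2).trace := by
  have hp : p1 ≠ p2 := List.rel_of_pairwise_cons hdist (by simp)
  have hq : q1 ≠ q2 := List.rel_of_pairwise_cons hdist.of_cons (by simp)
  simpa only [Bmat, Atil, Amat, Btil, hX1.2, hX2.2, Nat.cast_one]
    using trace_identities_alpha_general hX1.1 hX2.1 hp hq
end
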